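/- (Appendix C, step 1: monotonicity of the parabola cut-off.) Let n ≥ 2 and suppose Assumption A holds for the top-order coefficients. Let χ₁ ∈ C^∞(ℝ) satisfy χ₁(s) = 1 for s ≤ −1, χ₁(s) = 0 for s ≥ 0, 0 ≤ χ₁ ≤ 1, and χ₁' ≤ 0 on ℝ. Define ζ₁(x,ξ) = χ₁(x^∥_ξ − (1/2)|x^⊥_ξ|² + 1) for ξ ≠ 0. Then for every σ ∈ (0,1) there exists R₀ > 0 such that for every R ≥ R₀ and every (x,ξ) with ξ ≠ 0, x ≠ 0 and β(x,ξ) ≤ σ, the function ζ₁^R(x,ξ) := ζ₁(x/R, ξ) satisfies {p₂, ζ₁^R}(x,ξ) ≤ 0. -/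

import Mathlib

/-!
Write `z = x/R` and `b = z·v̂(ξ)`. By Pythagoras the argument of the cut-off is
`F = b + b²/2 - |z|²/2 + 1`, so the chain rule gives `{p₂, ζ₁^R} = χ₁'(F) {p₂, F}`, and since
`χ₁' ≤ 0` it suffices that `{p₂, F} ≥ 0` wherever `χ₁'(F) ≠ 0`, which forces `-1 ≤ F ≤ 0`.

Splitting `g = g₀ + (g - g₀)`, the bracket is (`PB_eq`)
`{p₂, F} = R⁻¹ (|v(ξ)| + error)`: the constant part of the metric contributes
`v·((1+b)v̂ - z) = |v|` exactly. On the strip `-1 ≤ F ≤ 0` with `b ≤ σ|z|`, the ratio `|z| = |x|/R`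
lies between two positive constants depending only on `σ` (`strip_bounds`): the parabola leaves
the cone `β ≤ σ` at a bounded distance and stays away from the origin. Hence
`|∂_x p₂| ≲ ⟨x⟩^{-1-μ}|ξ|²` and `|∂_ξ F| ≲ |ξ|⁻¹` make the error at most a constant times
`R^{-μ}|ξ|`, while `|v(ξ)| ≥ c|ξ|` by nondegeneracy of `g₀` (`vv_lower_bound`). For `R` large
the leading term dominates.
-/

open MeasureTheory Filter Topology

noncomputable section

/-- Euclidean norm of `x ∈ ℝⁿ`. -/
def nrm {n : ℕ} (x : Fin n → ℝ) : ℝ := Real.sqrt (∑ j, x j ^ 2)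

/-- Japanese bracket `⟨x⟩ = (1 + |x|²)^{1/2}`. -/
def jap {n : ℕ} (x : Fin n → ℝ) : ℝ := Real.sqrt (1 + ∑ j, x j ^ 2)

/-- Japanese bracket of a real number. -/
def japR (t : ℝ) : ℝ := Real.sqrt (1 + t ^ 2)

/-- Euclidean inner product on `ℝⁿ`. -/
def dotp {n : ℕ} (x y : Fin n → ℝ) : ℝ := ∑ j, x j * y j

/-- Partial derivative in the `j`-th coordinate direction. -/
def pd {n : ℕ} {F : Type} [NormedAddCommGroup F] [NormedSpace ℝ F]
    (j : Fin n) (f : (Fin n → ℝ) → F) (x : Fin n → ℝ) : F :=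
  fderiv ℝ f x (Pi.single j 1)

/-- Iterated partial derivatives along a list of coordinate indices
(encoding a multi-index). -/
def pdL {n : ℕ} {F : Type} [NormedAddCommGroup F] [NormedSpace ℝ F] :
    List (Fin n) → ((Fin n → ℝ) → F) → (Fin n → ℝ) → F
  | [], f => f
  | j :: L, f => pd j (pdL L f)

/-- `D_j = -i ∂_j`. -/
def Dop {n : ℕ} (j : Fin n) (φ : (Fin n → ℝ) → ℂ) (x : Fin n → ℝ) : ℂ :=
  -Complex.I * pd j φ x

/-- The Klein-Gordon type operator
`Pφ = Σ_{j,k} D_j(g^{jk} D_k φ) + (1/2) Σ_j (D_j(u_j φ) + u_j D_j φ) + u_0 φ`. -/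
def Pop {n : ℕ} (g : Fin n → Fin n → (Fin n → ℝ) → ℝ)
    (u : Fin (n + 1) → (Fin n → ℝ) → ℝ) (φ : (Fin n → ℝ) → ℂ) (x : Fin n → ℝ) : ℂ :=
  (∑ j, ∑ k, Dop j (fun y => (g j k y : ℂ) * Dop k φ y) x)
    + (1 / 2) * (∑ j, (Dop j (fun y => (u j.succ y : ℂ) * φ y) x
        + (u j.succ x : ℂ) * Dop j φ x))
    + (u 0 x : ℂ) * φ x

/-- The principal symbol `p₂(x,ξ) = Σ g^{jk}(x) ξ_j ξ_k`. -/
def p2 {n : ℕ} (g : Fin n → Fin n → (Fin n → ℝ) → ℝ) (x ξ : Fin n → ℝ) : ℝ :=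
  ∑ j, ∑ k, g j k x * ξ j * ξ k

/-- `v(ξ) = ∂_ξ p₀(ξ) = 2 g₀ ξ` for the constant cometric `g₀`. -/
def vv {n : ℕ} (g₀ : Fin n → Fin n → ℝ) (ξ : Fin n → ℝ) : Fin n → ℝ :=
  fun j => 2 * ∑ k, g₀ j k * ξ k

/-- `v̂(ξ) = v(ξ)/|v(ξ)|`. -/
def vhat {n : ℕ} (g₀ : Fin n → Fin n → ℝ) (ξ : Fin n → ℝ) : Fin n → ℝ :=
  (nrm (vv g₀ ξ))⁻¹ • vv g₀ ξ

/-- `β(x,ξ) = x̂ · v̂(ξ)`. -/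
def betaF {n : ℕ} (g₀ : Fin n → Fin n → ℝ) (x ξ : Fin n → ℝ) : ℝ :=
  dotp ((nrm x)⁻¹ • x) (vhat g₀ ξ)

/-- `x^⊥_ξ = x − (x·v̂(ξ)) v̂(ξ)`. -/
def perpx {n : ℕ} (g₀ : Fin n → Fin n → ℝ) (x ξ : Fin n → ℝ) : Fin n → ℝ :=
  x - dotp x (vhat g₀ ξ) • vhat g₀ ξ

/-- `τ(x,ξ) = c₀ √(|x|² − (x·v̂(ξ))²) − x·v̂(ξ)`. -/
def tauF {n : ℕ} (g₀ : Fin n → Fin n → ℝ) (c₀ : ℝ) (x ξ : Fin n → ℝ) : ℝ :=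
  c₀ * Real.sqrt (nrm x ^ 2 - dotp x (vhat g₀ ξ) ^ 2) - dotp x (vhat g₀ ξ)

/-- Partial derivative of a symbol in the `j`-th `x`-direction. -/
def pdx {n : ℕ} (j : Fin n) (a : (Fin n → ℝ) → (Fin n → ℝ) → ℝ) :
    (Fin n → ℝ) → (Fin n → ℝ) → ℝ :=
  fun x ξ => fderiv ℝ (fun y => a y ξ) x (Pi.single j 1)

/-- Partial derivative of a symbol in the `j`-th `ξ`-direction. -/
def pdxi {n : ℕ} (j : Fin n) (a : (Fin n → ℝ) → (Fin n → ℝ) → ℝ) :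
    (Fin n → ℝ) → (Fin n → ℝ) → ℝ :=
  fun x ξ => fderiv ℝ (fun ζ => a x ζ) ξ (Pi.single j 1)

/-- Iterated `x`-derivatives of a symbol. -/
def pdxL {n : ℕ} : List (Fin n) → ((Fin n → ℝ) → (Fin n → ℝ) → ℝ) →
    (Fin n → ℝ) → (Fin n → ℝ) → ℝ
  | [], a => a
  | j :: L, a => pdx j (pdxL L a)

/-- Iterated `ξ`-derivatives of a symbol. -/
def pdxiL {n : ℕ} : List (Fin n) → ((Fin n → ℝ) → (Fin n → ℝ) → ℝ) →
    (Fin n → ℝ) → (Fin n → ℝ) → ℝ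
  | [], a => a
  | j :: L, a => pdxi j (pdxiL L a)

/-- Poisson bracket `{a,b} = ∂_ξ a · ∂_x b − ∂_x a · ∂_ξ b`. -/
def PB {n : ℕ} (a b : (Fin n → ℝ) → (Fin n → ℝ) → ℝ) :
    (Fin n → ℝ) → (Fin n → ℝ) → ℝ :=
  fun x ξ => ∑ j, (pdxi j a x ξ * pdx j b x ξ - pdx j a x ξ * pdxi j b x ξ)

/-- The symbol class `S^{k,ℓ} = S(⟨x⟩^ℓ⟨ξ⟩^k, dx²/⟨x⟩² + dξ²/⟨ξ⟩²)`. -/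
def SymClass {n : ℕ} (k ℓ : ℝ) (a : (Fin n → ℝ) → (Fin n → ℝ) → ℝ) : Prop :=
  ContDiff ℝ (⊤ : ℕ∞) (fun p : (Fin n → ℝ) × (Fin n → ℝ) => a p.1 p.2) ∧
  ∀ Lx Lξ : List (Fin n), ∃ C > 0, ∀ x ξ,
    |pdxL Lx (pdxiL Lξ a) x ξ| ≤
      C * jap x ^ (ℓ - (Lx.length : ℝ)) * jap ξ ^ (k - (Lξ.length : ℝ))

/-- The incoming region `Γ₋(δ,σ,R)`. -/
def Gm {n : ℕ} (g₀ : Fin n → Fin n → ℝ) (δ σ R : ℝ) :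
    Set ((Fin n → ℝ) × (Fin n → ℝ)) :=
  {p | 1 - δ ≤ nrm p.2 ^ 2 ∧ nrm p.2 ^ 2 ≤ 1 + δ ∧ betaF g₀ p.1 p.2 ≤ σ ∧ R ≤ nrm p.1}

/-- The outgoing region `Γ₊(δ,σ,R)`. -/
def Gp {n : ℕ} (g₀ : Fin n → Fin n → ℝ) (δ σ R : ℝ) :
    Set ((Fin n → ℝ) × (Fin n → ℝ)) :=
  {p | 1 - δ ≤ nrm p.2 ^ 2 ∧ nrm p.2 ^ 2 ≤ 1 + δ ∧ σ ≤ betaF g₀ p.1 p.2 ∧ R ≤ nrm p.1}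

/-- Assumption A for the top-order coefficients `g^{jk}`: smooth, real-valued,
symmetric, everywhere nondegenerate, asymptotically flat with rate `⟨x⟩^{-μ-|α|}`
towards a constant nondegenerate symmetric matrix `g₀`. -/
structure AssumpG {n : ℕ} (g : Fin n → Fin n → (Fin n → ℝ) → ℝ)
    (g₀ : Fin n → Fin n → ℝ) (μ : ℝ) : Prop where
  smooth : ∀ j k, ContDiff ℝ (⊤ : ℕ∞) (g j k)
  symm : ∀ j k x, g j k x = g k j x
  nondeg : ∀ x (ξ : Fin n → ℝ), (∀ j, ∑ k, g j k x * ξ k = 0) → ξ = 0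
  symm0 : ∀ j k, g₀ j k = g₀ k j
  nondeg0 : ∀ ξ : Fin n → ℝ, (∀ j, ∑ k, g₀ j k * ξ k = 0) → ξ = 0
  decay : ∀ L : List (Fin n), ∃ C > 0, ∀ j k x,
    |pdL L (fun y => g j k y - g₀ j k) x| ≤ C * jap x ^ (-μ - (L.length : ℝ))

/-- Assumption A for the lower-order coefficients `u_j`, `j = 0,…,n`:
smooth, real-valued, with symbol-type decay `⟨x⟩^{-μ-|α|}`. -/
structure AssumpU {n : ℕ} (u : Fin (n + 1) → (Fin n → ℝ) → ℝ) (μ : ℝ) : Prop where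
  smooth : ∀ j, ContDiff ℝ (⊤ : ℕ∞) (u j)
  decay : ∀ L : List (Fin n), ∃ C > 0, ∀ j x,
    |pdL L (u j) x| ≤ C * jap x ^ (-μ - (L.length : ℝ))

/-- `∂_ξ p₂(x,ξ)` (the `x`-component of the Hamilton vector field). -/
def HamX {n : ℕ} (g : Fin n → Fin n → (Fin n → ℝ) → ℝ) (x ξ : Fin n → ℝ) :
    Fin n → ℝ :=
  fun j => fderiv ℝ (fun ζ => p2 g x ζ) ξ (Pi.single j 1)

/-- `−∂_x p₂(x,ξ)` (the `ξ`-component of the Hamilton vector field). -/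
def HamXi {n : ℕ} (g : Fin n → Fin n → (Fin n → ℝ) → ℝ) (x ξ : Fin n → ℝ) :
    Fin n → ℝ :=
  fun j => -(fderiv ℝ (fun y => p2 g y ξ) x (Pi.single j 1))

/-- Assumption B (null non-trapping): every null bicharacteristic with `ξ₀ ≠ 0`
is global and escapes to spatial infinity in both time directions. -/
def AssumptionB {n : ℕ} (g : Fin n → Fin n → (Fin n → ℝ) → ℝ) : Prop :=
  ∀ x₀ ξ₀ : Fin n → ℝ, p2 g x₀ ξ₀ = 0 → ξ₀ ≠ 0 →
    ∃ y η : ℝ → (Fin n → ℝ), y 0 = x₀ ∧ η 0 = ξ₀ ∧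
      (∀ t, HasDerivAt y (HamX g (y t) (η t)) t) ∧
      (∀ t, HasDerivAt η (HamXi g (y t) (η t)) t) ∧
      Tendsto (fun t => nrm (y t)) atTop atTop ∧
      Tendsto (fun t => nrm (y t)) atBot atTop

/-- A test function: smooth and compactly supported. -/
def IsTest {n : ℕ} (φ : (Fin n → ℝ) → ℂ) : Prop :=
  ContDiff ℝ (⊤ : ℕ∞) φ ∧ HasCompactSupport φ

end

/-! ### Algebra of the Euclidean structure -/

lemma nrm_nonneg {n : ℕ} (x : Fin n → ℝ) : 0 ≤ nrm x := Real.sqrt_nonneg _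

lemma nrm_sq {n : ℕ} (x : Fin n → ℝ) : nrm x ^ 2 = ∑ j, x j ^ 2 :=
  Real.sq_sqrt (Finset.sum_nonneg fun _ _ => sq_nonneg _)

lemma abs_le_nrm {n : ℕ} (x : Fin n → ℝ) (j : Fin n) : |x j| ≤ nrm x := by
  apply Real.abs_le_sqrt
  exact Finset.single_le_sum (f := fun j => x j ^ 2) (fun _ _ => sq_nonneg _) (Finset.mem_univ j)

lemma norm_le_nrm {n : ℕ} (x : Fin n → ℝ) : ‖x‖ ≤ nrm x :=
  (pi_norm_le_iff_of_nonneg (nrm_nonneg x)).2 fun j => abs_le_nrm x j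

lemma abs_dotp_le {n : ℕ} (x y : Fin n → ℝ) : |dotp x y| ≤ nrm x * nrm y := by
  apply abs_le_of_sq_le_sq _ (mul_nonneg (nrm_nonneg _) (nrm_nonneg _))
  rw [mul_pow, nrm_sq, nrm_sq]
  exact Finset.sum_mul_sq_le_sq_mul_sq _ _ _

lemma dotp_self {n : ℕ} (x : Fin n → ℝ) : dotp x x = nrm x ^ 2 := by
  rw [nrm_sq]; simp only [dotp, sq]

lemma dotp_smul_left {n : ℕ} (c : ℝ) (x y : Fin n → ℝ) : dotp (c • x) y = c * dotp x y := by
  simp [dotp, Finset.mul_sum, mul_assoc]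

lemma dotp_smul_right {n : ℕ} (c : ℝ) (x y : Fin n → ℝ) : dotp x (c • y) = c * dotp x y := by
  simp only [dotp, Finset.mul_sum, Pi.smul_apply, smul_eq_mul]
  exact Finset.sum_congr rfl fun _ _ => by ring

lemma dotp_add_left {n : ℕ} (x y z : Fin n → ℝ) : dotp (x + y) z = dotp x z + dotp y z := by
  simp [dotp, add_mul, Finset.sum_add_distrib]

lemma dotp_add_right {n : ℕ} (x y z : Fin n → ℝ) : dotp x (y + z) = dotp x y + dotp x z := by
  simp [dotp, mul_add, Finset.sum_add_distrib]

lemma dotp_comm {n : ℕ} (x y : Fin n → ℝ) : dotp x y = dotp y x := by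
  simp [dotp, mul_comm]

lemma dotp_single_left {n : ℕ} (j : Fin n) (y : Fin n → ℝ) : dotp (Pi.single j 1) y = y j := by
  simp [dotp, Pi.single_apply]

lemma nrm_smul_sq {n : ℕ} (c : ℝ) (x : Fin n → ℝ) : nrm (c • x) ^ 2 = c ^ 2 * nrm x ^ 2 := by
  simp only [← dotp_self, dotp_smul_left, dotp_smul_right]; ring

lemma nrm_smul_pos {n : ℕ} {c : ℝ} (hc : 0 ≤ c) (x : Fin n → ℝ) : nrm (c • x) = c * nrm x := by
  rw [← sq_eq_sq₀ (nrm_nonneg _) (mul_nonneg hc (nrm_nonneg _)), nrm_smul_sq, mul_pow]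

lemma nrm_add_sq {n : ℕ} (x y : Fin n → ℝ) :
    nrm (x + y) ^ 2 = nrm x ^ 2 + 2 * dotp x y + nrm y ^ 2 := by
  simp only [← dotp_self, dotp_add_left, dotp_add_right, dotp_comm y x]; ring

lemma nrm_eq_sqrt {n : ℕ} (x : Fin n → ℝ) : nrm x = √(nrm x ^ 2) :=
  (Real.sqrt_sq (nrm_nonneg x)).symm

/-- Pythagoras for the decomposition along `v̂(ξ)`. It also holds at the junk value `v̂ = 0`
taken where `v(ξ) = 0`, so it may be differentiated in `ξ` without localising. -/
lemma nrm_perpx_sq {n : ℕ} (g₀ : Fin n → Fin n → ℝ) (z ξ : Fin n → ℝ) :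
    nrm (perpx g₀ z ξ) ^ 2 = nrm z ^ 2 - dotp z (vhat g₀ ξ) ^ 2 := by
  have h : perpx g₀ z ξ = z + (-dotp z (vhat g₀ ξ)) • vhat g₀ ξ := by
    simp [perpx, sub_eq_add_neg]
  rw [h, nrm_add_sq, nrm_smul_sq, dotp_smul_right]
  by_cases hv : nrm (vv g₀ ξ) = 0
  · have : vhat g₀ ξ = 0 := by simp [vhat, hv]
    simp [this, dotp]
  · have : nrm (vhat g₀ ξ) ^ 2 = 1 := by
      rw [vhat, nrm_smul_sq]; field_simp
    rw [this]; ring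

lemma vv_add {n : ℕ} (g₀ : Fin n → Fin n → ℝ) (ξ η : Fin n → ℝ) :
    vv g₀ (ξ + η) = vv g₀ ξ + vv g₀ η := by
  ext j; simp [vv, mul_add, Finset.sum_add_distrib]

lemma vv_smul {n : ℕ} (g₀ : Fin n → Fin n → ℝ) (c : ℝ) (ξ : Fin n → ℝ) :
    vv g₀ (c • ξ) = c • vv g₀ ξ := by
  ext j
  simp only [vv, Finset.mul_sum, Pi.smul_apply, smul_eq_mul]
  exact Finset.sum_congr rfl fun _ _ => by ring

/-- Nondegeneracy of `g₀` makes `v` bounded below. The sup norm of `ξ` is used since all norms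
are equivalent and the coordinates of `ξ` are bounded by it. -/
lemma vv_lower_bound {n : ℕ} (g₀ : Fin n → Fin n → ℝ)
    (h : ∀ ξ : Fin n → ℝ, (∀ j, ∑ k, g₀ j k * ξ k = 0) → ξ = 0) :
    ∃ c > 0, ∀ ξ : Fin n → ℝ, c * ‖ξ‖ ≤ nrm (vv g₀ ξ) := by
  let T : (Fin n → ℝ) →ₗ[ℝ] (Fin n → ℝ) :=
    { toFun := vv g₀, map_add' := vv_add g₀, map_smul' := vv_smul g₀ }
  have hT : LinearMap.ker T = ⊥ := by
    rw [LinearMap.ker_eq_bot']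
    intro ξ hξ
    refine h ξ fun j => ?_
    have : vv g₀ ξ j = 0 := congrFun hξ j
    simpa [vv] using this
  obtain ⟨K, hK, hL⟩ := T.exists_antilipschitzWith hT
  have hK' : (0 : ℝ) < K := by exact_mod_cast hK
  refine ⟨(K : ℝ)⁻¹, by positivity, fun ξ => ?_⟩
  have h1 : ‖ξ‖ ≤ K * ‖T ξ‖ := by simpa using hL.le_mul_dist ξ 0
  have h2 : ‖T ξ‖ ≤ nrm (vv g₀ ξ) := norm_le_nrm _
  rw [inv_mul_le_iff₀ hK']
  exact h1.trans (by gcongr)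

/-! ### Derivatives of the symbols -/

lemma fderiv_eq_of_hasDerivAt_line {n : ℕ} {f : (Fin n → ℝ) → ℝ} {x e : Fin n → ℝ} {d : ℝ}
    (hf : DifferentiableAt ℝ f x) (h : HasDerivAt (fun t : ℝ => f (x + t • e)) d 0) :
    fderiv ℝ f x e = d := by
  rw [← hf.lineDeriv_eq_fderiv]; exact h.deriv

/-- The argument of the cut-off, `z^∥ - |z^⊥|²/2 + 1` rewritten through `b = z^∥`
and `N = |z|²`. -/
noncomputable def parab (b N : ℝ) : ℝ := b + 1 / 2 * b ^ 2 - 1 / 2 * N + 1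

lemma cutoff_eq {n : ℕ} (g₀ : Fin n → Fin n → ℝ) (χ : ℝ → ℝ) (z ζ : Fin n → ℝ) :
    χ (dotp z (vhat g₀ ζ) - 1 / 2 * nrm (perpx g₀ z ζ) ^ 2 + 1)
      = χ (parab (dotp z (vhat g₀ ζ)) (nrm z ^ 2)) := by
  rw [nrm_perpx_sq, parab]; ring_nf

lemma fderiv_cutoff_x {n : ℕ} (χ : ℝ → ℝ) (hχ : Differentiable ℝ χ) (r : ℝ)
    (w x : Fin n → ℝ) (j : Fin n) :
    fderiv ℝ (fun y => χ (parab (dotp (r • y) w) (nrm (r • y) ^ 2))) x (Pi.single j 1)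
      = deriv χ (parab (dotp (r • x) w) (nrm (r • x) ^ 2))
        * (r * ((1 + dotp (r • x) w) * w j - (r • x) j)) := by
  apply fderiv_eq_of_hasDerivAt_line
  · simp only [parab, nrm_sq, dotp]
    fun_prop
  · have e1 : ∀ t : ℝ, parab (dotp (r • (x + t • Pi.single j 1)) w)
        (nrm (r • (x + t • (Pi.single j 1 : Fin n → ℝ))) ^ 2)
        = parab (r * (dotp x w + t * w j)) (r ^ 2 * (nrm x ^ 2 + 2 * (t * x j) +
          t ^ 2 * nrm (Pi.single j 1 : Fin n → ℝ) ^ 2)) := by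
      intro t
      rw [nrm_smul_sq, nrm_add_sq, nrm_smul_sq, dotp_smul_left, dotp_add_left, dotp_smul_left,
        dotp_single_left, dotp_smul_right, dotp_comm x (Pi.single j 1), dotp_single_left]
    simp only [e1]
    have h0 : parab (dotp (r • x) w) (nrm (r • x) ^ 2) =
        parab (r * (dotp x w + 0 * w j)) (r ^ 2 * (nrm x ^ 2 + 2 * (0 * x j) +
          0 ^ 2 * nrm (Pi.single j 1 : Fin n → ℝ) ^ 2)) := by
      rw [← e1]; simp
    rw [h0]
    refine HasDerivAt.comp (h₂ := χ) (0 : ℝ) (hχ _).hasDerivAt ?_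
    unfold parab
    have hid := hasDerivAt_id' (0 : ℝ)
    have hb : HasDerivAt (fun t : ℝ => r * (dotp x w + t * w j)) (r * (1 * w j)) 0 :=
      ((hid.mul_const _).const_add _).const_mul _
    have hN : HasDerivAt (fun t : ℝ => r ^ 2 * (nrm x ^ 2 + 2 * (t * x j) +
        t ^ 2 * nrm (Pi.single j 1 : Fin n → ℝ) ^ 2)) _ 0 :=
      ((((hid.mul_const (x j)).const_mul 2).const_add (nrm x ^ 2)).add
        ((hid.pow 2).mul_const _)).const_mul _
    refine (((hb.add ((hb.pow 2).const_mul (1 / 2))).sub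
      (hN.const_mul (1 / 2))).add_const 1).congr_deriv ?_
    simp [dotp_smul_left]
    ring

/-- The `ξ_j`-derivative of `z·v̂(ξ)`, where `u = v(e_j)` and `v = v(ξ)`. -/
noncomputable def dpar {n : ℕ} (z v u : Fin n → ℝ) : ℝ :=
  dotp z u / nrm v - dotp z v * dotp v u / nrm v ^ 3

lemma fderiv_cutoff_xi {n : ℕ} (g₀ : Fin n → Fin n → ℝ) (χ : ℝ → ℝ) (hχ : Differentiable ℝ χ)
    (N : ℝ) (z ξ : Fin n → ℝ) (hξ : 0 < nrm (vv g₀ ξ)) (j : Fin n) :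
    fderiv ℝ (fun ζ => χ (parab (dotp z (vhat g₀ ζ)) N)) ξ (Pi.single j 1)
      = deriv χ (parab (dotp z (vhat g₀ ξ)) N)
        * ((1 + dotp z (vhat g₀ ξ)) * dpar z (vv g₀ ξ) (vv g₀ (Pi.single j 1))) := by
  have hne : ∑ j, vv g₀ ξ j ^ 2 ≠ 0 := by rw [← nrm_sq]; positivity
  have hne' : √(∑ j, vv g₀ ξ j ^ 2) ≠ 0 := hξ.ne'
  apply fderiv_eq_of_hasDerivAt_line
  · refine (hχ _).comp ξ ?_
    have : DifferentiableAt ℝ (fun ζ => dotp z (vhat g₀ ζ)) ξ := by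
      simp only [vhat, dotp_smul_right]
      refine DifferentiableAt.mul (DifferentiableAt.inv ?_ hξ.ne') ?_
      · unfold nrm
        refine DifferentiableAt.sqrt ?_ hne
        simp only [vv]
        fun_prop
      · simp only [dotp, vv]
        fun_prop
    unfold parab
    fun_prop
  · set v := vv g₀ ξ with hv
    set u := vv g₀ (Pi.single j 1) with hu
    have e1 : ∀ t : ℝ, dotp z (vhat g₀ (ξ + t • Pi.single j 1)) =
        (√(nrm v ^ 2 + 2 * (t * dotp v u) + t ^ 2 * nrm u ^ 2))⁻¹ * (dotp z v + t * dotp z u) := by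
      intro t
      rw [vhat, vv_add, vv_smul, dotp_smul_right, nrm_eq_sqrt, nrm_add_sq, nrm_smul_sq,
        dotp_smul_right, dotp_add_right, dotp_smul_right]
    have hid := hasDerivAt_id' (0 : ℝ)
    have hN : HasDerivAt (fun t : ℝ => nrm v ^ 2 + 2 * (t * dotp v u) + t ^ 2 * nrm u ^ 2) _ 0 :=
      (((hid.mul_const (dotp v u)).const_mul 2).const_add (nrm v ^ 2)).add
        ((hid.pow 2).mul_const _)
    have hsq := hN.sqrt (by simpa using hξ.ne')
    have hb0 := (hsq.inv (by simpa [Real.sqrt_sq hξ.le] using hξ.ne')).mul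
      ((hid.mul_const (dotp z u)).const_add (dotp z v))
    have hb : HasDerivAt (fun t : ℝ => dotp z (vhat g₀ (ξ + t • Pi.single j 1)))
        (dpar z v u) 0 := by
      simp only [e1]
      refine hb0.congr_deriv ?_
      simp [Real.sqrt_sq hξ.le, dpar]
      field_simp
      ring
    have hp : HasDerivAt (fun t : ℝ => parab (dotp z (vhat g₀ (ξ + t • Pi.single j 1))) N)
        ((1 + dotp z (vhat g₀ ξ)) * dpar z v u) 0 := by
      unfold parab
      refine (((hb.add ((hb.pow 2).const_mul (1 / 2))).sub_const
        (1 / 2 * N)).add_const 1).congr_deriv ?_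
      simp
      ring
    have h0 : parab (dotp z (vhat g₀ ξ)) N
        = parab (dotp z (vhat g₀ (ξ + (0 : ℝ) • Pi.single j 1))) N := by simp
    rw [h0]
    exact HasDerivAt.comp (h₂ := χ) (0 : ℝ) (hχ _).hasDerivAt hp

lemma abs_dpar_le {n : ℕ} (z v u : Fin n → ℝ) (hv : 0 < nrm v) :
    |dpar z v u| ≤ 2 * nrm z * nrm u / nrm v := by
  have h1 := abs_dotp_le z u
  have h2 := abs_dotp_le z v
  have h3 := abs_dotp_le v u
  have hz := nrm_nonneg z
  have hu := nrm_nonneg u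
  have h4 : |dotp z v * dotp v u| ≤ (nrm z * nrm v) * (nrm v * nrm u) := by
    rw [abs_mul]; gcongr
  calc |dpar z v u| ≤ |dotp z u / nrm v| + |dotp z v * dotp v u / nrm v ^ 3| := abs_sub _ _
    _ = |dotp z u| / nrm v + |dotp z v * dotp v u| / nrm v ^ 3 := by
      rw [abs_div, abs_div, abs_of_pos hv, abs_of_pos (pow_pos hv 3)]
    _ ≤ (nrm z * nrm u) / nrm v + (nrm z * nrm v) * (nrm v * nrm u) / nrm v ^ 3 := by gcongr
    _ = 2 * nrm z * nrm u / nrm v := by field_simp; ring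

lemma pdxi_p2 {n : ℕ} (g : Fin n → Fin n → (Fin n → ℝ) → ℝ)
    (hs : ∀ j k x, g j k x = g k j x) (x ξ : Fin n → ℝ) (j : Fin n) :
    pdxi j (p2 g) x ξ = 2 * ∑ k, g j k x * ξ k := by
  apply fderiv_eq_of_hasDerivAt_line
  · unfold p2; fun_prop
  · unfold p2
    have hc : ∀ a : Fin n, HasDerivAt
        (fun t : ℝ => (ξ + t • (Pi.single j 1 : Fin n → ℝ)) a)
        ((Pi.single j 1 : Fin n → ℝ) a) 0 := by
      intro a
      simpa using ((hasDerivAt_id' (0 : ℝ)).mul_const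
        ((Pi.single j 1 : Fin n → ℝ) a)).const_add (ξ a)
    have := HasDerivAt.fun_sum (u := Finset.univ) fun a _ =>
      HasDerivAt.fun_sum (u := Finset.univ) fun b _ =>
        ((hc a).const_mul (g a b x)).mul (hc b)
    refine this.congr_deriv ?_
    simp only [zero_smul, add_zero, Finset.sum_add_distrib]
    have h1 : ∑ a, ∑ b, g a b x * (Pi.single j 1 : Fin n → ℝ) a * ξ b = ∑ k, g j k x * ξ k := by
      simp [Pi.single_apply]
    have h2 : ∑ a, ∑ b, g a b x * ξ a * (Pi.single j 1 : Fin n → ℝ) b = ∑ k, g j k x * ξ k := by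
      simp [Pi.single_apply, hs j]
    rw [h1, h2]; ring

lemma pdx_p2 {n : ℕ} (g : Fin n → Fin n → (Fin n → ℝ) → ℝ)
    (hd : ∀ j k, Differentiable ℝ (g j k)) (x ξ : Fin n → ℝ) (i : Fin n) :
    pdx i (p2 g) x ξ = ∑ j, ∑ k, pd i (g j k) x * ξ j * ξ k := by
  have h : HasFDerivAt (fun y => p2 g y ξ)
      (∑ j, ∑ k, (ξ k) • (ξ j) • fderiv ℝ (g j k) x) x := by
    unfold p2
    refine HasFDerivAt.fun_sum fun j _ => HasFDerivAt.fun_sum fun k _ => ?_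
    exact (((hd j k) x).hasFDerivAt.mul_const (ξ j)).mul_const (ξ k)
  unfold pdx
  rw [h.fderiv]
  simp only [sum_apply, smul_apply, smul_eq_mul, pd]
  exact Finset.sum_congr rfl fun _ _ => Finset.sum_congr rfl fun _ _ => by ring

/-! ### The support of the derivative of the cut-off -/

lemma deriv_cutoff_eq_zero {χ : ℝ → ℝ} (hχ1 : ∀ s ≤ (-1 : ℝ), χ s = 1)
    (hχ0 : ∀ s ≥ (0 : ℝ), χ s = 0) {s : ℝ} (hs : s ∉ Set.Icc (-1 : ℝ) 0) : deriv χ s = 0 := by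
  rw [Set.mem_Icc, not_and_or, not_le, not_le] at hs
  rcases hs with hs | hs
  · have : χ =ᶠ[𝓝 s] fun _ => 1 := by
      filter_upwards [Iio_mem_nhds hs] with t ht using hχ1 t ht.le
    simp [this.deriv_eq]
  · have : χ =ᶠ[𝓝 s] fun _ => 0 := by
      filter_upwards [Ioi_mem_nhds hs] with t ht using hχ0 t ht.le
    simp [this.deriv_eq]

/-- The parabolic strip `-1 ≤ b + b²/2 - ρ²/2 + 1 ≤ 0` meets the region `b ≤ σρ` only where
`ρ = |z|` is bounded above and away from zero. -/
lemma strip_bounds {b ρ σ : ℝ} (hσ0 : 0 < σ) (hσ1 : σ < 1) (hρ : 0 ≤ ρ) (hb : |b| ≤ ρ)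
    (hbσ : b ≤ σ * ρ) (h1 : -1 ≤ parab b (ρ ^ 2)) (h2 : parab b (ρ ^ 2) ≤ 0) :
    1 / 2 ≤ ρ ∧ ρ ≤ 8 / (1 - σ ^ 2) := by
  unfold parab at h1 h2
  obtain ⟨hb1, hb2⟩ := abs_le.1 hb
  have hκ : 0 < 1 - σ ^ 2 := by nlinarith
  constructor
  · by_contra! h
    nlinarith [sq_nonneg b]
  · rw [le_div_iff₀ hκ]
    by_contra! h
    have h8 : 8 < ρ := by nlinarith [sq_nonneg σ]
    rcases le_or_gt 0 b with h0 | h0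
    · have : b ^ 2 ≤ (σ * ρ) ^ 2 := by gcongr
      nlinarith
    · have hb3 : b ^ 2 ≤ ρ ^ 2 := sq_le_sq' hb1 hb2
      have hb4 : -2 ≤ b := by nlinarith
      nlinarith

/-! ### Decay of the coefficients and the sign of the bracket -/

lemma AssumpG.differentiable {n : ℕ} {g : Fin n → Fin n → (Fin n → ℝ) → ℝ}
    {g₀ : Fin n → Fin n → ℝ} {μ : ℝ} (hg : AssumpG g g₀ μ) (j k : Fin n) :
    Differentiable ℝ (g j k) := (hg.smooth j k).differentiable (by simp)

/-- First-order decay with a constant independent of the direction of differentiation. -/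
lemma AssumpG.decay_pd {n : ℕ} {g : Fin n → Fin n → (Fin n → ℝ) → ℝ}
    {g₀ : Fin n → Fin n → ℝ} {μ : ℝ} (hg : AssumpG g g₀ μ) :
    ∃ C ≥ 0, ∀ i j k x, |pd i (g j k) x| ≤ C * jap x ^ (-μ - 1) := by
  choose C hC hCb using fun i : Fin n => hg.decay [i]
  refine ⟨∑ i, C i, Finset.sum_nonneg fun i _ => (hC i).le, fun i j k x => ?_⟩
  have h := hCb i j k x
  have h1 : pdL [i] (fun y => g j k y - g₀ j k) x = pd i (g j k) x := by
    simp only [pdL, pd, fderiv_sub_const]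
  have hle : C i ≤ ∑ i, C i :=
    Finset.single_le_sum (f := C) (fun i _ => (hC i).le) (Finset.mem_univ i)
  rw [h1] at h
  refine (h.trans_eq (by simp)).trans (mul_le_mul_of_nonneg_right hle ?_)
  exact Real.rpow_nonneg (Real.sqrt_nonneg _) _

lemma nrm_le_jap {n : ℕ} (x : Fin n → ℝ) : nrm x ≤ jap x :=
  Real.sqrt_le_sqrt (by linarith)

lemma jap_pos {n : ℕ} (x : Fin n → ℝ) : 0 < jap x := by
  apply Real.sqrt_pos.2
  have : 0 ≤ ∑ j, x j ^ 2 := Finset.sum_nonneg fun _ _ => sq_nonneg _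
  linarith

/-- The bracket in closed form. The leading term is exactly `|v(ξ)|`, since
`v·((1+b)v̂ - z) = |v|(1+b) - |v|b`. -/
lemma PB_eq {n : ℕ} {g : Fin n → Fin n → (Fin n → ℝ) → ℝ} {g₀ : Fin n → Fin n → ℝ} {μ : ℝ}
    (hg : AssumpG g g₀ μ) (χ : ℝ → ℝ) (hχ : Differentiable ℝ χ) {R : ℝ} (hR : 0 < R)
    (x ξ z : Fin n → ℝ) (hz : z = R⁻¹ • x) (hξ : 0 < nrm (vv g₀ ξ)) :
    PB (p2 g) (fun y ζ => χ (dotp (R⁻¹ • y) (vhat g₀ ζ)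
          - 1 / 2 * nrm (perpx g₀ (R⁻¹ • y) ζ) ^ 2 + 1)) x ξ =
      deriv χ (parab (dotp z (vhat g₀ ξ)) (nrm z ^ 2)) * (R⁻¹ * (nrm (vv g₀ ξ) +
        ∑ j, (2 * (∑ k, (g j k x - g₀ j k) * ξ k)
            * ((1 + dotp z (vhat g₀ ξ)) * vhat g₀ ξ j - z j)
          - R * pdx j (p2 g) x ξ * ((1 + dotp z (vhat g₀ ξ))
            * dpar z (vv g₀ ξ) (vv g₀ (Pi.single j 1)))))) := by
  simp only [cutoff_eq]
  have hlead : nrm (vv g₀ ξ)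
      = ∑ j, vv g₀ ξ j * ((1 + dotp z (vhat g₀ ξ)) * vhat g₀ ξ j - z j) := by
    have h1 : dotp (vv g₀ ξ) (vhat g₀ ξ) = nrm (vv g₀ ξ) := by
      rw [vhat, dotp_smul_right, dotp_self]; field_simp
    have h2 : dotp (vv g₀ ξ) z = nrm (vv g₀ ξ) * dotp z (vhat g₀ ξ) := by
      rw [vhat, dotp_smul_right, dotp_comm]; field_simp
    have h3 : ∑ j, vv g₀ ξ j * ((1 + dotp z (vhat g₀ ξ)) * vhat g₀ ξ j - z j)
        = (1 + dotp z (vhat g₀ ξ)) * dotp (vv g₀ ξ) (vhat g₀ ξ) - dotp (vv g₀ ξ) z := by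
      simp only [dotp, Finset.mul_sum, ← Finset.sum_sub_distrib]
      exact Finset.sum_congr rfl fun _ _ => by ring
    rw [h3, h1, h2]; ring
  conv_rhs => rw [hlead, ← Finset.sum_add_distrib, Finset.mul_sum, Finset.mul_sum]
  unfold PB
  refine Finset.sum_congr rfl fun j _ => ?_
  rw [pdxi_p2 g hg.symm]
  have hx : pdx j (fun y ζ => χ (parab (dotp (R⁻¹ • y) (vhat g₀ ζ)) (nrm (R⁻¹ • y) ^ 2))) x ξ = _ :=
    fderiv_cutoff_x χ hχ R⁻¹ (vhat g₀ ξ) x j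
  have hxi : pdxi j (fun y ζ => χ (parab (dotp (R⁻¹ • y) (vhat g₀ ζ)) (nrm (R⁻¹ • y) ^ 2))) x ξ
      = _ := fderiv_cutoff_xi g₀ χ hχ (nrm (R⁻¹ • x) ^ 2) (R⁻¹ • x) ξ hξ j
  rw [hx, hxi, ← hz]
  have hsplit : 2 * ∑ k, g j k x * ξ k = vv g₀ ξ j + 2 * ∑ k, (g j k x - g₀ j k) * ξ k := by
    rw [vv, ← mul_add, ← Finset.sum_add_distrib]
    congr 1
    exact Finset.sum_congr rfl fun _ _ => by ring
  rw [hsplit]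
  field_simp
  ring

set_option maxHeartbeats 400000 in
/-- Appendix C, step 1: monotonicity of the parabola
cut-off. With `χ₁` as in the paper and
`ζ₁(x,ξ) = χ₁(x^∥_ξ − ½|x^⊥_ξ|² + 1)`, for every `σ ∈ (0,1)` there is `R₀ > 0`
such that for all `R ≥ R₀` and all `(x,ξ)` with `ξ ≠ 0`, `x ≠ 0`,
`β(x,ξ) ≤ σ`, one has `{p₂, ζ₁(·/R, ·)}(x,ξ) ≤ 0`. -/
theorem stmt_14 {n : ℕ} (hn : 2 ≤ n)
    (g : Fin n → Fin n → (Fin n → ℝ) → ℝ) (g₀ : Fin n → Fin n → ℝ)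
    (μ : ℝ) (hμ0 : 0 < μ) (hμ1 : μ < 1) (hg : AssumpG g g₀ μ)
    (χ₁ : ℝ → ℝ) (hχsm : ContDiff ℝ (⊤ : ℕ∞) χ₁)
    (hχ1 : ∀ s ≤ (-1 : ℝ), χ₁ s = 1) (hχ0 : ∀ s ≥ (0 : ℝ), χ₁ s = 0)
    (hχrange : ∀ s, χ₁ s ∈ Set.Icc (0 : ℝ) 1) (hχmono : ∀ s, deriv χ₁ s ≤ 0)
    (σ : ℝ) (hσ : σ ∈ Set.Ioo (0 : ℝ) 1) :
    ∃ R₀ > (0 : ℝ), ∀ R ≥ R₀, ∀ x ξ : Fin n → ℝ,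
      ξ ≠ 0 → x ≠ 0 → betaF g₀ x ξ ≤ σ →
      PB (p2 g)
        (fun y ζ => χ₁ (dotp (R⁻¹ • y) (vhat g₀ ζ)
          - 1 / 2 * nrm (perpx g₀ (R⁻¹ • y) ζ) ^ 2 + 1)) x ξ ≤ 0 := by
  obtain ⟨c, hc, hcv⟩ := vv_lower_bound g₀ hg.nondeg0
  obtain ⟨C₀, hC₀, hdec0⟩ := hg.decay []
  obtain ⟨C₁, hC₁, hdec1⟩ := hg.decay_pd
  have hχ : Differentiable ℝ χ₁ := hχsm.differentiable (by simp)
  have hκ : 0 < 1 - σ ^ 2 := by nlinarith [hσ.1, hσ.2]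
  -- `M` bounds `|x|/R` on the strip, `K` bounds every `|v(e_j)|`.
  set M : ℝ := 8 / (1 - σ ^ 2) with hM
  have hM0 : 0 < M := by positivity
  clear_value M
  obtain ⟨K, hK0, hK⟩ : ∃ K : ℝ, 0 ≤ K ∧ ∀ j : Fin n, nrm (vv g₀ (Pi.single j 1)) ≤ K :=
    ⟨∑ j : Fin n, nrm (vv g₀ (Pi.single j 1)), Finset.sum_nonneg fun _ _ => nrm_nonneg _,
      fun j => Finset.single_le_sum (f := fun j : Fin n => nrm (vv g₀ (Pi.single j 1)))
        (fun _ _ => nrm_nonneg _) (Finset.mem_univ j)⟩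
  -- `A₀ ‖ξ‖ ⟨x⟩^{-μ}` bounds each summand of the error in `PB_eq`.
  set A₀ : ℝ := 2 * (n * C₀) * (1 + 2 * M) + 2 * (n * (n * C₁)) * ((1 + M) * (2 * M * K / c))
    with hA₀
  have hA₀0 : 0 ≤ A₀ := by positivity
  clear_value A₀
  have hlim : Tendsto (fun R : ℝ => n * A₀ * (R / 2) ^ (-μ)) atTop (𝓝 (n * A₀ * 0)) :=
    ((tendsto_rpow_neg_atTop hμ0).comp (tendsto_id.atTop_div_const two_pos)).const_mul _
  rw [mul_zero] at hlim
  obtain ⟨R₁, hR₁⟩ := eventually_atTop.1 (hlim.eventually (ge_mem_nhds hc))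
  refine ⟨max R₁ 1, by positivity, fun R hR x ξ hξ hx hβ => ?_⟩
  have hRpos : 0 < R := lt_of_lt_of_le one_pos ((le_max_right _ _).trans hR)
  have hsmall : n * A₀ * (R / 2) ^ (-μ) ≤ c := hR₁ R ((le_max_left _ _).trans hR)
  have hξn : 0 < ‖ξ‖ := norm_pos_iff.2 hξ
  have hv : 0 < nrm (vv g₀ ξ) := (mul_pos hc hξn).trans_le (hcv ξ)
  set z : Fin n → ℝ := R⁻¹ • x with hz
  rw [PB_eq hg χ₁ hχ hRpos x ξ z hz hv]
  set w := vhat g₀ ξ with hw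
  set b := dotp z w with hb
  by_cases hs : parab b (nrm z ^ 2) ∈ Set.Icc (-1 : ℝ) 0
  swap
  · rw [deriv_cutoff_eq_zero hχ1 hχ0 hs, zero_mul]
  refine mul_nonpos_of_nonpos_of_nonneg (hχmono _) (mul_nonneg (by positivity) ?_)
  have hw1 : nrm w = 1 := by
    rw [hw, vhat, nrm_smul_pos (by positivity)]; field_simp
  have hbz : |b| ≤ nrm z := by simpa [hw1] using abs_dotp_le z w
  have hxpos : 0 < nrm x := (norm_pos_iff.2 hx).trans_le (norm_le_nrm x)
  have hzx : nrm z = R⁻¹ * nrm x := nrm_smul_pos (by positivity) x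
  have hbσ : b ≤ σ * nrm z := by
    have h1 : (nrm x)⁻¹ * dotp x w ≤ σ := by rw [← dotp_smul_left]; exact hβ
    have h2 : dotp x w ≤ nrm x * σ := (inv_mul_le_iff₀ hxpos).1 h1
    have h3 : b = R⁻¹ * dotp x w := dotp_smul_left _ _ _
    rw [h3, hzx]
    calc R⁻¹ * dotp x w ≤ R⁻¹ * (nrm x * σ) := by gcongr
      _ = _ := by ring
  obtain ⟨hlow, hup⟩ := strip_bounds hσ.1 hσ.2 (nrm_nonneg z) hbz hbσ hs.1 hs.2
  rw [← hM] at hup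
  have hJ : 0 < jap x := jap_pos x
  have hRx : R / 2 ≤ nrm x := by
    rw [hzx, inv_mul_eq_div, le_div_iff₀ hRpos] at hlow; linarith
  have hRJ : R / 2 ≤ jap x := hRx.trans (nrm_le_jap x)
  set D : ℝ := jap x ^ (-μ) with hD
  have hD0 : 0 < D := Real.rpow_pos_of_pos hJ _
  have hD1 : jap x ^ (-μ - 1) = D / jap x := by rw [Real.rpow_sub_one hJ.ne']
  have hDR : D ≤ (R / 2) ^ (-μ) :=
    Real.rpow_le_rpow_of_nonpos (by positivity) hRJ (by linarith)
  have hξk : ∀ k, |ξ k| ≤ ‖ξ‖ := fun k => norm_le_pi_norm ξ k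
  have hb1 : |1 + b| ≤ 1 + M := by
    have := abs_add_le 1 b
    rw [abs_one] at this
    linarith
  have hterm : ∀ j : Fin n, |2 * (∑ k, (g j k x - g₀ j k) * ξ k) * ((1 + b) * w j - z j)
          - R * pdx j (p2 g) x ξ * ((1 + b) * dpar z (vv g₀ ξ) (vv g₀ (Pi.single j 1)))|
        ≤ A₀ * D * ‖ξ‖ := by
    intro j
    have he : |∑ k, (g j k x - g₀ j k) * ξ k| ≤ n * C₀ * D * ‖ξ‖ := by
      calc _ ≤ ∑ k, |(g j k x - g₀ j k) * ξ k| := Finset.abs_sum_le_sum_abs _ _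
        _ ≤ ∑ _k : Fin n, C₀ * D * ‖ξ‖ := by
          refine Finset.sum_le_sum fun k _ => ?_
          rw [abs_mul]
          have : |g j k x - g₀ j k| ≤ C₀ * D := by simpa [pdL] using hdec0 j k x
          exact mul_le_mul this (hξk k) (abs_nonneg _) (by positivity)
        _ = _ := by simp; ring
    have ha : |(1 + b) * w j - z j| ≤ 1 + 2 * M := by
      have h1 : |(1 + b) * w j| ≤ (1 + M) * 1 := by
        rw [abs_mul]
        exact mul_le_mul hb1 ((abs_le_nrm w j).trans hw1.le) (abs_nonneg _) (by positivity)
      have h2 := (abs_le_nrm z j).trans hup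
      have h3 := abs_sub ((1 + b) * w j) (z j)
      linarith
    have hq : |pdx j (p2 g) x ξ| ≤ n * (n * C₁) * (D / jap x) * ‖ξ‖ ^ 2 := by
      rw [pdx_p2 g hg.differentiable]
      calc _ ≤ ∑ i, |∑ k, pd j (g i k) x * ξ i * ξ k| := Finset.abs_sum_le_sum_abs _ _
        _ ≤ ∑ i, ∑ k, |pd j (g i k) x * ξ i * ξ k| :=
          Finset.sum_le_sum fun _ _ => Finset.abs_sum_le_sum_abs _ _
        _ ≤ ∑ _i : Fin n, ∑ _k : Fin n, C₁ * (D / jap x) * ‖ξ‖ * ‖ξ‖ := by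
          refine Finset.sum_le_sum fun i _ => Finset.sum_le_sum fun k _ => ?_
          rw [abs_mul, abs_mul]
          have h1 := hdec1 j i k x
          rw [hD1] at h1
          have h2 := hξk i
          have h3 := hξk k
          gcongr
        _ = _ := by simp; ring
    have hd : |dpar z (vv g₀ ξ) (vv g₀ (Pi.single j 1))| ≤ 2 * M * K / c / ‖ξ‖ := by
      have h1 := hK j
      have h2 := hcv ξ
      have h3 := nrm_nonneg (vv g₀ (Pi.single j 1))
      calc _ ≤ 2 * nrm z * nrm (vv g₀ (Pi.single j 1)) / nrm (vv g₀ ξ) := abs_dpar_le _ _ _ hv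
        _ ≤ 2 * M * K / (c * ‖ξ‖) :=
          div_le_div₀ (by positivity)
            (mul_le_mul (by linarith) h1 h3 (by positivity)) (by positivity) h2
        _ = _ := by rw [div_div]
    -- The factor `⟨x⟩⁻¹` gained by differentiating `g` absorbs `R`.
    have hRq : |R * pdx j (p2 g) x ξ| ≤ 2 * (n * (n * C₁)) * D * ‖ξ‖ ^ 2 := by
      rw [abs_mul, abs_of_pos hRpos]
      calc R * |pdx j (p2 g) x ξ|
          ≤ (2 * jap x) * (n * (n * C₁) * (D / jap x) * ‖ξ‖ ^ 2) := by
            gcongr; linarith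
        _ = _ := by field_simp
    calc _ ≤ |2 * (∑ k, (g j k x - g₀ j k) * ξ k) * ((1 + b) * w j - z j)|
          + |R * pdx j (p2 g) x ξ * ((1 + b) * dpar z (vv g₀ ξ) (vv g₀ (Pi.single j 1)))| :=
          abs_sub _ _
      _ ≤ 2 * (n * C₀ * D * ‖ξ‖) * (1 + 2 * M)
          + 2 * (n * (n * C₁)) * D * ‖ξ‖ ^ 2 * ((1 + M) * (2 * M * K / c / ‖ξ‖)) := by
          rw [abs_mul, abs_mul, abs_two, abs_mul (R * _), abs_mul (1 + b)]
          gcongr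
      _ = A₀ * D * ‖ξ‖ := by rw [hA₀]; field_simp
  have hsum := Finset.abs_sum_le_sum_abs (fun j : Fin n =>
    2 * (∑ k, (g j k x - g₀ j k) * ξ k) * ((1 + b) * w j - z j)
      - R * pdx j (p2 g) x ξ * ((1 + b) * dpar z (vv g₀ ξ) (vv g₀ (Pi.single j 1)))) Finset.univ
  have hsum2 := hsum.trans (Finset.sum_le_sum fun j _ => hterm j)
  have hfin : n * A₀ * D * ‖ξ‖ ≤ c * ‖ξ‖ := by
    have : n * A₀ * D ≤ n * A₀ * (R / 2) ^ (-μ) := by gcongr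
    have := this.trans hsmall
    gcongr
  have hconst : ∑ _j : Fin n, A₀ * D * ‖ξ‖ = n * A₀ * D * ‖ξ‖ := by simp; ring
  rw [hconst] at hsum2
  linarith [(abs_le.1 hsum2).1, hcv ξ]
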